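/- arXiv:2511.14853 — 2 statements merged into one kernel-verified Lean document; each statement's English description precedes it below -/
import Mathlib

section
/- Let K ≥ 2, let a : Fin K → ℝ satisfy a k > 0 for all k, set a₀ = Σ_{k < K} a k, fix an index j < K, and fix t ∈ (0,1). Let b : Fin (K−1) → ℝ enumerate the values a k for k ≠ j. Then the integral over the set {x ∈ ℝ^(K−2) : x i > 0 for all i and Σ_i x i < 1 − t} of ∏_{i < K−2} (x i)^(b i − 1) · (1 − t − Σ_i x i)^(b (K−2) − 1) equals (1−t)^(a₀ − a j − 1) · (∏_{k ≠ j} Γ(a k)) / Γ(a₀ − a j). Consequently, the marginal density at t of the j-th coordinate of a Dirichlet distribution with parameter a is Γ(a₀)/(Γ(a j)·Γ(a₀ − a j)) · t^(a j − 1) · (1−t)^(a₀ − a j − 1), i.e. each component θ_j marginally follows a Beta(a_j, a₀ − a_j) distribution, as asserted in Theorem 1. -/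
open MeasureTheory

/-! Peeling off one coordinate `y` turns the Dirichlet kernel on the simplex of size `s` into
`y ^ (β₀ - 1)` times the kernel of the remaining coordinates on the simplex of size `s - y`. By
Tonelli and induction, the whole integral therefore reduces to one-variable beta integrals
`∫ y ^ (β₀ - 1) * (s - y) ^ (B - 1) = s ^ (β₀ + B - 1) * Γ β₀ * Γ B / Γ (β₀ + B)`, whose Gamma
factors telescope. The marginal of a Dirichlet law is the case `s = 1 - t`. -/

section

open Set
open scoped ENNReal

lemma setLIntegral_Ioo_zero_eq_mul {s : ℝ} (hs : 0 < s) (f : ℝ → ℝ≥0∞) :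
    ∫⁻ y in Ioo 0 s, f y = ENNReal.ofReal s * ∫⁻ u in Ioo 0 1, f (s * u) := by
  have image_Ioo : (s * ·) '' Ioo 0 1 = Ioo 0 s := by
    rw [image_mul_left_Ioo hs, mul_zero, mul_one]
  rw [← image_Ioo, lintegral_image_eq_lintegral_abs_deriv_mul measurableSet_Ioo
      (fun u _ ↦ by simpa using ((hasDerivAt_id u).const_mul s).hasDerivWithinAt)
      (mul_right_injective₀ hs.ne').injOn,
    lintegral_const_mul' _ _ ENNReal.ofReal_ne_top, abs_of_pos hs]

lemma setLIntegral_Ioo_rpow_mul_sub_rpow {α β s : ℝ} (hα : 0 < α) (hβ : 0 < β) (hs : 0 < s) :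
    ∫⁻ y in Ioo 0 s, ENNReal.ofReal (y ^ (α - 1) * (s - y) ^ (β - 1)) =
      ENNReal.ofReal (s ^ (α + β - 1) * ProbabilityTheory.beta α β) := by
  have beta_pos := ProbabilityTheory.beta_pos hα hβ
  have rpow_split : s ^ (α + β - 1) = s * s ^ (α - 1) * s ^ (β - 1) := by
    rw [← Real.rpow_one_add' hs.le (by linarith), ← Real.rpow_add hs]
    ring_nf
  have rescaled_eq_betaPDF : ∀ u ∈ Ioo (0 : ℝ) 1,
      ENNReal.ofReal s * ENNReal.ofReal ((s * u) ^ (α - 1) * (s - s * u) ^ (β - 1)) =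
        ENNReal.ofReal (s ^ (α + β - 1) * ProbabilityTheory.beta α β) *
          ENNReal.ofReal (1 / ProbabilityTheory.beta α β * u ^ (α - 1) * (1 - u) ^ (β - 1)) := by
    intro u hu
    rw [← ENNReal.ofReal_mul hs.le, ← ENNReal.ofReal_mul (by positivity), ← mul_one_sub,
      Real.mul_rpow hs.le hu.1.le, Real.mul_rpow hs.le (sub_nonneg.2 hu.2.le), rpow_split]
    field_simp
  rw [setLIntegral_Ioo_zero_eq_mul hs, ← lintegral_const_mul' _ _ ENNReal.ofReal_ne_top,
    setLIntegral_congr_fun measurableSet_Ioo rescaled_eq_betaPDF,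
    lintegral_const_mul' _ _ ENNReal.ofReal_ne_top, ← ProbabilityTheory.lintegral_betaPDF,
    ProbabilityTheory.lintegral_betaPDF_eq_one hα hβ, mul_one]

/-- The open corner simplex of size `s`: the interior of the simplex with vertices `0` and
`s • eᵢ`. It parametrizes the positive vectors with coordinate sum `s` indexed by `Option ι`, the
omitted coordinate being `s - ∑ i, x i`. -/
def cornerSimplex (ι : Type*) [Fintype ι] (s : ℝ) : Set (ι → ℝ) :=
  {x | (∀ i, 0 < x i) ∧ ∑ i, x i < s}

/-- The unnormalized Dirichlet density on `cornerSimplex ι s`, with parameter `b i` at the free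
coordinate `x i` and parameter `c` at the omitted coordinate `s - ∑ i, x i`. -/
noncomputable def dirichletKernel {ι : Type*} [Fintype ι] (b : ι → ℝ) (c s : ℝ) (x : ι → ℝ) : ℝ :=
  (∏ i, x i ^ (b i - 1)) * (s - ∑ i, x i) ^ (c - 1)

/-- The multivariate beta function of the parameters `b i`, `i : ι`, and `c`, which normalizes
`dirichletKernel b c 1`. -/
noncomputable def multivariateBeta {ι : Type*} [Fintype ι] (b : ι → ℝ) (c : ℝ) : ℝ :=
  (∏ i, Real.Gamma (b i)) * Real.Gamma c / Real.Gamma (∑ i, b i + c)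

section

variable {ι κ : Type*} [Fintype ι] [Fintype κ] {s : ℝ}

lemma measurableSet_cornerSimplex : MeasurableSet (cornerSimplex ι s) := by
  unfold cornerSimplex
  measurability

lemma measurable_dirichletKernel (b : ι → ℝ) (c s : ℝ) : Measurable (dirichletKernel b c s) := by
  unfold dirichletKernel
  fun_prop

lemma dirichletKernel_nonneg (b : ι → ℝ) (c : ℝ) {x : ι → ℝ} (hx : x ∈ cornerSimplex ι s) :
    0 ≤ dirichletKernel b c s x :=
  mul_nonneg (Finset.prod_nonneg fun i _ ↦ Real.rpow_nonneg (hx.1 i).le _)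
    (Real.rpow_nonneg (sub_nonneg.2 hx.2.le) _)

lemma sum_add_pos {b : ι → ℝ} {c : ℝ} (hb : ∀ i, 0 < b i) (hc : 0 < c) : 0 < ∑ i, b i + c :=
  add_pos_of_nonneg_of_pos (Finset.sum_nonneg fun i _ ↦ (hb i).le) hc

lemma multivariateBeta_pos {b : ι → ℝ} {c : ℝ} (hb : ∀ i, 0 < b i) (hc : 0 < c) :
    0 < multivariateBeta b c :=
  div_pos (mul_pos (Finset.prod_pos fun i _ ↦ Real.Gamma_pos_of_pos (hb i))
    (Real.Gamma_pos_of_pos hc)) (Real.Gamma_pos_of_pos (sum_add_pos hb hc))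

lemma comp_equiv_mem_cornerSimplex (e : κ ≃ ι) {x : ι → ℝ} :
    x ∘ e ∈ cornerSimplex κ s ↔ x ∈ cornerSimplex ι s := by
  simp only [cornerSimplex, mem_ofPred_eq, Function.comp_apply, e.forall_congr_left,
    e.apply_symm_apply, e.sum_comp x]

lemma dirichletKernel_comp_equiv (e : κ ≃ ι) (b : ι → ℝ) (c s : ℝ) (x : ι → ℝ) :
    dirichletKernel (b ∘ e) c s (x ∘ e) = dirichletKernel b c s x := by
  simp only [dirichletKernel, Function.comp_apply, e.sum_comp x,
    e.prod_comp fun i ↦ x i ^ (b i - 1)]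

lemma multivariateBeta_comp_equiv (e : κ ≃ ι) (b : ι → ℝ) (c : ℝ) :
    multivariateBeta (b ∘ e) c = multivariateBeta b c := by
  simp only [multivariateBeta, Function.comp_apply, e.sum_comp b,
    e.prod_comp fun i ↦ Real.Gamma (b i)]

end

section

variable {n : ℕ} {s y : ℝ} {x : Fin n → ℝ}

lemma cons_mem_cornerSimplex :
    (Fin.cons y x : Fin (n + 1) → ℝ) ∈ cornerSimplex (Fin (n + 1)) s ↔
      y ∈ Ioo 0 s ∧ x ∈ cornerSimplex (Fin n) (s - y) := by
  simp only [cornerSimplex, mem_ofPred_eq, Fin.forall_fin_succ, Fin.sum_univ_succ, Fin.cons_zero,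
    Fin.cons_succ, mem_Ioo]
  constructor
  · rintro ⟨⟨hy, hx⟩, hsum⟩
    have sum_nonneg : 0 ≤ ∑ i, x i := Finset.sum_nonneg fun i _ ↦ (hx i).le
    exact ⟨⟨hy, by linarith⟩, hx, by linarith⟩
  · rintro ⟨⟨hy, -⟩, hx, hsum⟩
    exact ⟨⟨hy, hx⟩, by linarith⟩

lemma dirichletKernel_cons (b : Fin (n + 1) → ℝ) (c : ℝ) :
    dirichletKernel b c s (Fin.cons y x : Fin (n + 1) → ℝ) =
      y ^ (b 0 - 1) * dirichletKernel (Fin.tail b) c (s - y) x := by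
  simp only [dirichletKernel, Fin.prod_univ_succ, Fin.sum_univ_succ, Fin.cons_zero, Fin.cons_succ,
    Fin.tail, mul_assoc, sub_sub]

lemma multivariateBeta_eq_tail_mul_beta {b : Fin (n + 1) → ℝ} {c : ℝ}
    (hb : ∀ i, 0 < Fin.tail b i) (hc : 0 < c) :
    multivariateBeta b c =
      multivariateBeta (Fin.tail b) c * ProbabilityTheory.beta (b 0) (∑ i, Fin.tail b i + c) := by
  have Gamma_sum_ne_zero : Real.Gamma (∑ i, Fin.tail b i + c) ≠ 0 :=
    (Real.Gamma_pos_of_pos (sum_add_pos hb hc)).ne'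
  rw [multivariateBeta, Fin.prod_univ_succ, Fin.sum_univ_succ, add_assoc]
  simp only [Fin.tail] at Gamma_sum_ne_zero
  simp only [multivariateBeta, ProbabilityTheory.beta, Fin.tail]
  field_simp

lemma volume_preserving_cons (n : ℕ) :
    MeasurePreserving (fun p : ℝ × (Fin n → ℝ) ↦ (Fin.cons p.1 p.2 : Fin (n + 1) → ℝ)) := by
  convert (volume_preserving_piFinSuccAbove (fun _ : Fin (n + 1) ↦ ℝ) 0).symm using 1
  funext p
  exact (Fin.insertNth_zero' p.1 p.2).symm

lemma setLIntegral_cornerSimplex_succ {f : (Fin (n + 1) → ℝ) → ℝ≥0∞} (hf : Measurable f) :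
    ∫⁻ x in cornerSimplex (Fin (n + 1)) s, f x =
      ∫⁻ y in Ioo 0 s, ∫⁻ x in cornerSimplex (Fin n) (s - y), f (Fin.cons y x) := by
  classical
  have measurable_indicator : Measurable ((cornerSimplex (Fin (n + 1)) s).indicator f) :=
    hf.indicator measurableSet_cornerSimplex
  rw [← lintegral_indicator measurableSet_cornerSimplex,
    ← (volume_preserving_cons n).lintegral_comp measurable_indicator, Measure.volume_eq_prod,
    lintegral_prod (fun p ↦ (cornerSimplex _ s).indicator f (Fin.cons p.1 p.2))
      (measurable_indicator.comp (volume_preserving_cons n).measurable).aemeasurable,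
    ← lintegral_indicator measurableSet_Ioo]
  refine lintegral_congr fun y ↦ ?_
  by_cases hy : y ∈ Ioo 0 s
  · rw [indicator_of_mem hy, ← lintegral_indicator measurableSet_cornerSimplex]
    simp only [indicator_apply, cons_mem_cornerSimplex, hy, true_and]
  · simp only [indicator_apply, cons_mem_cornerSimplex, hy, false_and, if_false, lintegral_zero]

end

lemma setLIntegral_cornerSimplex_fin_dirichletKernel {n : ℕ} {b : Fin n → ℝ} {c s : ℝ}
    (hb : ∀ i, 0 < b i) (hc : 0 < c) (hs : 0 < s) :
    ∫⁻ x in cornerSimplex (Fin n) s, ENNReal.ofReal (dirichletKernel b c s x) =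
      ENNReal.ofReal (s ^ (∑ i, b i + c - 1) * multivariateBeta b c) := by
  induction n generalizing s with
  | zero =>
    have cornerSimplex_eq_univ : cornerSimplex (Fin 0) s = univ := by
      ext x; simp [cornerSimplex, hs]
    rw [cornerSimplex_eq_univ, Measure.restrict_univ, lintegral_unique]
    simp [dirichletKernel, multivariateBeta, volume_pi, (Real.Gamma_pos_of_pos hc).ne']
  | succ n ih =>
    have tail_pos : ∀ i, 0 < Fin.tail b i := fun i ↦ hb i.succ
    have beta_tail_nonneg := (multivariateBeta_pos tail_pos hc).le
    have inner_integral : ∀ y ∈ Ioo 0 s,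
        ∫⁻ x in cornerSimplex (Fin n) (s - y),
            ENNReal.ofReal (dirichletKernel b c s (Fin.cons y x : Fin (n + 1) → ℝ)) =
          ENNReal.ofReal (multivariateBeta (Fin.tail b) c) *
            ENNReal.ofReal (y ^ (b 0 - 1) * (s - y) ^ (∑ i, Fin.tail b i + c - 1)) := by
      intro y ⟨y_pos, y_lt⟩
      have rpow_nonneg := Real.rpow_nonneg y_pos.le (b 0 - 1)
      simp only [dirichletKernel_cons, ENNReal.ofReal_mul rpow_nonneg]
      rw [lintegral_const_mul' _ _ ENNReal.ofReal_ne_top, ih tail_pos (sub_pos.2 y_lt),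
        mul_comm (_ ^ _), ENNReal.ofReal_mul beta_tail_nonneg, mul_left_comm]
    rw [setLIntegral_cornerSimplex_succ (measurable_dirichletKernel b c s).ennreal_ofReal,
      setLIntegral_congr_fun measurableSet_Ioo inner_integral,
      lintegral_const_mul' _ _ ENNReal.ofReal_ne_top,
      setLIntegral_Ioo_rpow_mul_sub_rpow (hb 0) (sum_add_pos tail_pos hc) hs,
      ← ENNReal.ofReal_mul beta_tail_nonneg, multivariateBeta_eq_tail_mul_beta tail_pos hc,
      Fin.sum_univ_succ, add_assoc, mul_left_comm]
    rfl

section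

variable {ι : Type*} [Fintype ι] {b : ι → ℝ} {c s : ℝ}

lemma setLIntegral_cornerSimplex_dirichletKernel (hb : ∀ i, 0 < b i) (hc : 0 < c) (hs : 0 < s) :
    ∫⁻ x in cornerSimplex ι s, ENNReal.ofReal (dirichletKernel b c s x) =
      ENNReal.ofReal (s ^ (∑ i, b i + c - 1) * multivariateBeta b c) := by
  let e := (Fintype.equivFin ι).symm
  have comp_preserving : MeasurePreserving (fun x : ι → ℝ ↦ x ∘ e) :=
    (volume_measurePreserving_piCongrLeft (fun _ ↦ ℝ) e).symm
  have preimage_cornerSimplex : (fun x : ι → ℝ ↦ x ∘ e) ⁻¹' cornerSimplex _ s = cornerSimplex ι s :=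
    ext fun _ ↦ comp_equiv_mem_cornerSimplex e
  rw [← e.sum_comp b, ← multivariateBeta_comp_equiv e]
  simp only [← dirichletKernel_comp_equiv e b]
  rw [← preimage_cornerSimplex, comp_preserving.setLIntegral_comp_preimage
    measurableSet_cornerSimplex (measurable_dirichletKernel (b ∘ e) c s).ennreal_ofReal]
  exact setLIntegral_cornerSimplex_fin_dirichletKernel (fun i ↦ hb (e i)) hc hs

theorem setIntegral_cornerSimplex_dirichletKernel (hb : ∀ i, 0 < b i) (hc : 0 < c) (hs : 0 < s) :
    ∫ x in cornerSimplex ι s, dirichletKernel b c s x =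
      s ^ (∑ i, b i + c - 1) * multivariateBeta b c := by
  rw [integral_eq_lintegral_of_nonneg_ae
      (ae_restrict_of_forall_mem measurableSet_cornerSimplex fun _ ↦ dirichletKernel_nonneg b c)
      (measurable_dirichletKernel b c s).aestronglyMeasurable,
    setLIntegral_cornerSimplex_dirichletKernel hb hc hs, ENNReal.toReal_ofReal]
  exact mul_nonneg (Real.rpow_nonneg hs.le _) (multivariateBeta_pos hb hc).le

end

@[to_additive]
lemma prod_comp_equiv_ne_eq_prod_erase {ι κ M : Type*} [Fintype ι] [Fintype κ] [DecidableEq ι]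
    [CommMonoid M] {j : ι} (e : κ ≃ {k // k ≠ j}) (f : ι → M) :
    ∏ i, f (e i) = ∏ k ∈ Finset.univ.erase j, f k := by
  rw [e.prod_comp fun k ↦ f k, Finset.prod_subtype (p := (· ≠ j)) _ (by simp) f]

end

/-- Marginalizing a Dirichlet distribution: integrating the Dirichlet kernel over
the remaining coordinates (which sum to `1 - t`) yields
`(1-t)^(a₀ - a j - 1) · (∏_{k ≠ j} Γ(a k)) / Γ(a₀ - a j)`; consequently the
`j`-th coordinate of a Dirichlet(a) vector marginally has the
Beta(a j, a₀ - a j) density at `t`. -/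
theorem dirichlet_marginal_beta (K : ℕ) (hK : 2 ≤ K) (a : Fin K → ℝ)
    (ha : ∀ k, 0 < a k) (j : Fin K) (t : ℝ) (ht : t ∈ Set.Ioo (0 : ℝ) 1)
    (b : Fin (K - 1) → ℝ) (e : Fin (K - 1) ≃ {k : Fin K // k ≠ j})
    (hb : ∀ i, b i = a (e i)) :
    (∫ x : Fin (K - 2) → ℝ in
        {x : Fin (K - 2) → ℝ | (∀ i, 0 < x i) ∧ ∑ i, x i < 1 - t},
        (∏ i : Fin (K - 2), x i ^ (b (Fin.castLE (by omega) i) - 1)) *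
          (1 - t - ∑ i, x i) ^ (b ⟨K - 2, by omega⟩ - 1)) =
      (1 - t) ^ ((∑ k, a k) - a j - 1) *
        (∏ k ∈ Finset.univ.erase j, Real.Gamma (a k)) /
          Real.Gamma ((∑ k, a k) - a j) ∧
    (Real.Gamma (∑ k, a k) / ∏ k, Real.Gamma (a k)) * t ^ (a j - 1) *
      (∫ x : Fin (K - 2) → ℝ in
        {x : Fin (K - 2) → ℝ | (∀ i, 0 < x i) ∧ ∑ i, x i < 1 - t},
        (∏ i : Fin (K - 2), x i ^ (b (Fin.castLE (by omega) i) - 1)) *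
          (1 - t - ∑ i, x i) ^ (b ⟨K - 2, by omega⟩ - 1)) =
      Real.Gamma (∑ k, a k) /
          (Real.Gamma (a j) * Real.Gamma ((∑ k, a k) - a j)) *
        (t ^ (a j - 1) * (1 - t) ^ ((∑ k, a k) - a j - 1)) := by
  obtain ⟨m, rfl⟩ := Nat.exists_eq_add_of_le' hK
  have b_pos : ∀ i, 0 < b i := fun i ↦ hb i ▸ ha (e i)
  have sum_b : ∑ i : Fin m, b i.castSucc + b (Fin.last m) = (∑ k, a k) - a j := by
    rw [← Fin.sum_univ_castSucc (n := m) b, ← Finset.sum_erase_eq_sub (Finset.mem_univ j),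
      ← sum_comp_equiv_ne_eq_sum_erase e a]
    exact Fintype.sum_congr _ _ hb
  have prod_Gamma_b : (∏ i : Fin m, Real.Gamma (b i.castSucc)) * Real.Gamma (b (Fin.last m)) =
      ∏ k ∈ Finset.univ.erase j, Real.Gamma (a k) := by
    rw [← Fin.prod_univ_castSucc (n := m) fun i ↦ Real.Gamma (b i),
      ← prod_comp_equiv_ne_eq_prod_erase e fun k ↦ Real.Gamma (a k)]
    exact Fintype.prod_congr _ _ fun i ↦ congrArg Real.Gamma (hb i)
  have dirichlet_integral := setIntegral_cornerSimplex_dirichletKernel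
    (fun i : Fin m ↦ b_pos i.castSucc) (b_pos (Fin.last m)) (sub_pos.2 ht.2)
  rw [multivariateBeta, sum_b, prod_Gamma_b, ← mul_div_assoc] at dirichlet_integral
  refine ⟨dirichlet_integral, (congrArg _ dirichlet_integral).trans ?_⟩
  have prod_ne_zero : ∏ k ∈ Finset.univ.erase j, Real.Gamma (a k) ≠ 0 :=
    Finset.prod_ne_zero_iff.2 fun k _ ↦ (Real.Gamma_pos_of_pos (ha k)).ne'
  rw [← Finset.mul_prod_erase _ (fun k ↦ Real.Gamma (a k)) (Finset.mem_univ j)]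
  field_simp
end

section
/- Let Y ⊆ Δ_{K−1} be a nonempty compact convex set of prior mean vectors, let 0 < n̲ ≤ n̄, let κ : Fin K → ℕ be counts with Σ_k κ_k = n > 0, and let c : Fin K → ℝ be the coefficients of a linear functional. Define E(y, n⁰) = Σ_k c_k · (n⁰·y_k + κ_k)/(n⁰ + n), the posterior expectation of the linear functional θ ↦ Σ_k c_k θ_k under the Dirichlet posterior with parameter n⁰·y + κ. Then the supremum of E over Y × [n̲, n̄] is attained at a point (y*, n*) with y* an extreme point of Y and n* ∈ {n̲, n̄}, and likewise the infimum is attained at an extreme point of Y paired with an endpoint of [n̲, n̄]. Hence the posterior envelopes of Theorem 1 for linear functionals are attained at the extreme points of Y and the endpoints of the prior-strength interval. -/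
/-!
Writing `m` for the empirical mean `κ / n`, the posterior mean `(n⁰ y + κ) / (n⁰ + n)` is the
barycentre of `y` and `m` with weights `n⁰` and `n`. A linear functional commutes with barycentres,
so it is maximized by first maximizing it over the prior mean `y`, where compactness provides an
extreme maximizer irrespective of `n⁰`. As `n⁰` grows the barycentre moves from `m` towards `y`, so
the remaining function of `n⁰` is monotone or antitone and is maximized at an endpoint. The minimum
is the maximum of the opposite functional.
-/

open Set

section PosteriorMean

variable {E : Type*} [AddCommGroup E] [Module ℝ E]

/-- The posterior mean under a conjugate prior with mean `y` and strength `t`, after `n`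
observations with empirical mean `m`. The sample size `n` is a real weight, and the observations
enter through `m` (so `n • m` is the vector of counts) in order that both means live in `E`. -/
noncomputable def posteriorMean (m : E) (n t : ℝ) (y : E) : E :=
  (t + n)⁻¹ • (t • y + n • m)

theorem map_posteriorMean {E' F : Type*} [AddCommGroup E'] [Module ℝ E'] [FunLike F E E']
    [LinearMapClass F ℝ E E'] (f : F) (m : E) (n t : ℝ) (y : E) :
    f (posteriorMean m n t y) = posteriorMean (f m) n t (f y) := by
  simp only [posteriorMean, map_smul, map_add]

theorem posteriorMean_eq_sub (m : E) {n t : ℝ} (h : t + n ≠ 0) (y : E) :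
    posteriorMean m n t y = y - (n / (t + n)) • (y - m) := by
  rw [posteriorMean, inv_smul_eq_iff₀ h, smul_sub, smul_smul, mul_div_cancel₀ n h]
  module

theorem posteriorMean_mono (m : ℝ) {n t : ℝ} (hn : 0 ≤ n) (ht : 0 ≤ t) :
    Monotone (posteriorMean m n t) := by
  intro y z hyz
  simp only [posteriorMean, smul_eq_mul]
  gcongr

theorem monotoneOn_posteriorMean {m y n : ℝ} (hn : 0 ≤ n) (hmy : m ≤ y) :
    MonotoneOn (fun t ↦ posteriorMean m n t y) (Ioi 0) := by
  intro s (hs : 0 < s) t (ht : 0 < t) hst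
  have : 0 ≤ y - m := sub_nonneg.2 hmy
  simp only [posteriorMean_eq_sub m (add_pos_of_pos_of_nonneg hs hn).ne',
    posteriorMean_eq_sub m (add_pos_of_pos_of_nonneg ht hn).ne', smul_eq_mul]
  gcongr

theorem antitoneOn_posteriorMean {m y n : ℝ} (hn : 0 ≤ n) (hym : y ≤ m) :
    AntitoneOn (fun t ↦ posteriorMean m n t y) (Ioi 0) := by
  have hneg (t : ℝ) : posteriorMean (-m) n t (-y) = -posteriorMean m n t y :=
    (map_posteriorMean (-LinearMap.id : ℝ →ₗ[ℝ] ℝ) m n t y).symm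
  simpa only [hneg, neg_neg] using (monotoneOn_posteriorMean hn (neg_le_neg hym)).neg

theorem exists_endpoint_forall_posteriorMean_le {a b n : ℝ} (ha : 0 < a) (hn : 0 ≤ n) (m y : ℝ) :
    ∃ s ∈ ({a, b} : Set ℝ), ∀ t ∈ Icc a b, posteriorMean m n t y ≤ posteriorMean m n s y := by
  rcases le_total m y with hmy | hym
  · refine ⟨b, mem_insert_of_mem a rfl, fun t ⟨hat, htb⟩ ↦ ?_⟩
    have ht : 0 < t := ha.trans_le hat
    exact monotoneOn_posteriorMean hn hmy ht (ht.trans_le htb) htb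
  · refine ⟨a, mem_insert a {b}, fun t ⟨hat, _⟩ ↦ ?_⟩
    exact antitoneOn_posteriorMean hn hym ha (ha.trans_le hat) hat

end PosteriorMean

theorem sum_mul_posterior_eq_sum_smul_proj {ι : Type*} [Fintype ι] (c κ : ι → ℝ) {n : ℝ}
    (hn : n ≠ 0) (t : ℝ) (y : ι → ℝ) :
    ∑ k, c k * ((t * y k + κ k) / (t + n)) =
      (∑ k, c k • ContinuousLinearMap.proj k : StrongDual ℝ (ι → ℝ))
        (posteriorMean (n⁻¹ • κ) n t y) := by
  simp [posteriorMean, smul_inv_smul₀ hn, div_eq_inv_mul, mul_add]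

section ExtremePoints

variable {E : Type*} [AddCommGroup E] [Module ℝ E] [TopologicalSpace E] [T2Space E]
  [IsTopologicalAddGroup E] [ContinuousSMul ℝ E] [LocallyConvexSpace ℝ E] {Y : Set E}

theorem exists_extremePoint_isMaxOn (hYne : Y.Nonempty) (hYcomp : IsCompact Y)
    (f : StrongDual ℝ E) : ∃ x ∈ Y.extremePoints ℝ, IsMaxOn f Y x := by
  have hexposed : IsExposed ℝ Y (f.toExposed Y) := ContinuousLinearMap.toExposed.isExposed
  have hne : (f.toExposed Y).Nonempty :=
    hYcomp.exists_isMaxOn hYne f.continuous.continuousOn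
  obtain ⟨x, hx⟩ := (hexposed.isCompact hYcomp).extremePoints_nonempty hne
  exact ⟨x, hexposed.isExtreme.extremePoints_subset_extremePoints hx, hx.1.2⟩

theorem exists_extremePoint_endpoint_forall_posteriorMean_le (hYne : Y.Nonempty)
    (hYcomp : IsCompact Y) {a b n : ℝ} (ha : 0 < a) (hn : 0 ≤ n) (m : E) (f : StrongDual ℝ E) :
    ∃ x ∈ Y.extremePoints ℝ, ∃ s ∈ ({a, b} : Set ℝ), ∀ y ∈ Y, ∀ t ∈ Icc a b,
      f (posteriorMean m n t y) ≤ f (posteriorMean m n s x) := by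
  obtain ⟨x, hx, hmax⟩ := exists_extremePoint_isMaxOn hYne hYcomp f
  obtain ⟨s, hs, hend⟩ := exists_endpoint_forall_posteriorMean_le (b := b) ha hn (f m) (f x)
  refine ⟨x, hx, s, hs, fun y hy t ht ↦ ?_⟩
  simp only [map_posteriorMean]
  calc posteriorMean (f m) n t (f y)
      ≤ posteriorMean (f m) n t (f x) := posteriorMean_mono (f m) hn (ha.le.trans ht.1) (hmax hy)
    _ ≤ posteriorMean (f m) n s (f x) := hend t ht

theorem posterior_envelope_attained_at_extreme_points_general (hYne : Y.Nonempty)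
    (hYcomp : IsCompact Y) {a b n : ℝ} (ha : 0 < a) (hn : 0 ≤ n) (m : E) (f : StrongDual ℝ E) :
    (∃ x ∈ Y.extremePoints ℝ, ∃ s ∈ ({a, b} : Set ℝ), ∀ y ∈ Y, ∀ t ∈ Icc a b,
      f (posteriorMean m n t y) ≤ f (posteriorMean m n s x)) ∧
    (∃ x ∈ Y.extremePoints ℝ, ∃ s ∈ ({a, b} : Set ℝ), ∀ y ∈ Y, ∀ t ∈ Icc a b,
      f (posteriorMean m n s x) ≤ f (posteriorMean m n t y)) :=
  ⟨exists_extremePoint_endpoint_forall_posteriorMean_le hYne hYcomp ha hn m f, by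
    simpa only [neg_apply, neg_le_neg_iff] using
      exists_extremePoint_endpoint_forall_posteriorMean_le hYne hYcomp ha hn m (-f)⟩

end ExtremePoints

/-- Extreme-point reduction for posterior expectations of linear functionals:
over a nonempty compact convex credal set `Y` of prior means and a prior-strength
interval `[n̲, n̄]`, the supremum (resp. infimum) of
`E(y,n⁰) = ∑ k, c k · (n⁰ y_k + κ_k)/(n⁰+n)` is attained at an extreme point of
`Y` paired with an endpoint of `[n̲, n̄]`. -/
theorem posterior_envelope_attained_at_extreme_points (K : ℕ)
    (Y : Set (Fin K → ℝ)) (hYne : Y.Nonempty) (hYcomp : IsCompact Y)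
    (hYconv : Convex ℝ Y)
    (hYsub : Y ⊆ {θ : Fin K → ℝ | (∀ k, 0 ≤ θ k) ∧ ∑ k, θ k = 1})
    (nlo nhi : ℝ) (hlo : 0 < nlo) (hlohi : nlo ≤ nhi)
    (κ : Fin K → ℕ) (n : ℕ) (hκn : ∑ k, κ k = n) (hn : 0 < n)
    (c : Fin K → ℝ) :
    (∃ ystar ∈ Y.extremePoints ℝ, ∃ nstar ∈ ({nlo, nhi} : Set ℝ),
      ∀ y ∈ Y, ∀ n0 ∈ Set.Icc nlo nhi,
        ∑ k, c k * ((n0 * y k + κ k) / (n0 + n)) ≤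
          ∑ k, c k * ((nstar * ystar k + κ k) / (nstar + n))) ∧
    (∃ ystar ∈ Y.extremePoints ℝ, ∃ nstar ∈ ({nlo, nhi} : Set ℝ),
      ∀ y ∈ Y, ∀ n0 ∈ Set.Icc nlo nhi,
        ∑ k, c k * ((nstar * ystar k + κ k) / (nstar + n)) ≤
          ∑ k, c k * ((n0 * y k + κ k) / (n0 + n))) := by
  simpa only [sum_mul_posterior_eq_sum_smul_proj c (κ ·) (Nat.cast_ne_zero.2 hn.ne')] using
    posterior_envelope_attained_at_extreme_points_general hYne hYcomp hlo n.cast_nonneg _ _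
end
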